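/- Let n ≥ 2 and θ ∈ (0,π) with θ ≠ π/2, and let (x,y) be a critical zero of Φ^θ_n. Then the Hessian matrix of Φ^θ_n at (x,y) is diagonal, equal to exp(−(x²+y²)/2)·diag(cos θ · H_n''(x), sin θ · H_n''(y)), and it is nondegenerate (its determinant is nonzero); in particular the nodal set of Φ^θ_n has a nondegenerate double crossing at (x,y). -/

import Mathlib

/-- The physicist's Hermite polynomials: `H 0 = 1`, `H 1 = 2X`,
`H (n+2) = 2X · H (n+1) - 2(n+1) · H n`. -/
noncomputable def H : ℕ → Polynomial ℝ
  | 0 => 1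
  | 1 => Polynomial.C 2 * Polynomial.X
  | n + 2 => Polynomial.C 2 * Polynomial.X * H (n + 1) - Polynomial.C (2 * (n + 1) : ℝ) * H n

/-- The eigenfunction `Φ^θ_n(x,y) = (cos θ · H_n(x) + sin θ · H_n(y)) e^{-(x²+y²)/2}`. -/
noncomputable def Phi (n : ℕ) (θ : ℝ) : ℝ × ℝ → ℝ := fun p =>
  (Real.cos θ * (H n).eval p.1 + Real.sin θ * (H n).eval p.2) *
    Real.exp (-(p.1 ^ 2 + p.2 ^ 2) / 2)

/-- A critical zero of `Φ^θ_n` is a point where `Φ^θ_n` and both of its first-order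
partial derivatives vanish. -/
noncomputable def IsCriticalZero (n : ℕ) (θ : ℝ) (p : ℝ × ℝ) : Prop :=
  Phi n θ p = 0 ∧
  deriv (fun x => Phi n θ (x, p.2)) p.1 = 0 ∧
  deriv (fun y => Phi n θ (p.1, y)) p.2 = 0

/-!
Write `Φ = u * w` with `u (x, y) = cos θ H_n(x) + sin θ H_n(y)` and `w` the Gaussian. Where `u` and
its gradient vanish, the product rule leaves only the terms in which every derivative falls on `u`;
since `w` never vanishes, `Φ` and `u` have the same critical zeros, and there `Hess Φ = w • Hess u`,
which is diagonal because `u` is a sum of functions of one variable each.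
Nondegeneracy says that the zeros of `H_n'` are simple: `H_n'` is a multiple of `H_{n-1}`, and
Hermite polynomials are separable because `H_{k+1} = 2X H_k - H_k'` has derivative `2(k+1) H_k`, so
that a common zero of the two would be a common zero of `H_k` and `H_k'`.
-/

open Polynomial Filter
open scoped Topology

section ProductRule

variable {𝕜 𝔸 : Type*} [NontriviallyNormedField 𝕜] [NormedRing 𝔸] [NormedAlgebra 𝕜 𝔸]

theorem hasDerivAt_mul_of_left_eq_zero {f g : 𝕜 → 𝔸} {f' : 𝔸} {x : 𝕜} (hf : HasDerivAt f f' x)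
    (hg : ContinuousAt g x) (hfx : f x = 0) : HasDerivAt (fun t => f t * g t) (f' * g x) x := by
  rw [hasDerivAt_iff_tendsto_slope] at hf ⊢
  refine (hf.mul (hg.mono_left nhdsWithin_le_nhds)).congr fun t => ?_
  simp [slope_def_module, hfx]

theorem deriv_mul_of_left_eq_zero {f g : 𝕜 → 𝔸} {x : 𝕜} (hf : DifferentiableAt 𝕜 f x)
    (hg : ContinuousAt g x) (hfx : f x = 0) : deriv (fun t => f t * g t) x = deriv f x * g x :=
  (hasDerivAt_mul_of_left_eq_zero hf.hasDerivAt hg hfx).deriv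

theorem deriv_deriv_mul_of_left_eq_zero {f g : 𝕜 → 𝔸} {x : 𝕜}
    (hf : ∀ᶠ t in 𝓝 x, DifferentiableAt 𝕜 f t) (hg : ∀ᶠ t in 𝓝 x, DifferentiableAt 𝕜 g t)
    (hf' : DifferentiableAt 𝕜 (deriv f) x) (hg' : ContinuousAt (deriv g) x)
    (hfx : f x = 0) (hfx' : deriv f x = 0) :
    deriv (deriv fun t => f t * g t) x = deriv (deriv f) x * g x := by
  have product_rule :
      (deriv fun t => f t * g t) =ᶠ[𝓝 x] fun t => deriv f t * g t + f t * deriv g t := by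
    filter_upwards [hf, hg] with t hft hgt using deriv_fun_mul hft hgt
  have first := hasDerivAt_mul_of_left_eq_zero hf'.hasDerivAt hg.self_of_nhds.continuousAt hfx'
  have second := hasDerivAt_mul_of_left_eq_zero hf.self_of_nhds.hasDerivAt hg' hfx
  rw [product_rule.deriv_eq, (first.fun_add second).deriv, hfx', zero_mul, add_zero]

theorem deriv_deriv_mul_of_left_eq_zero₂ {u w : 𝕜 → 𝕜 → 𝔸} {x y : 𝕜}
    (hu : ∀ᶠ s in 𝓝 x, DifferentiableAt 𝕜 (u s) y) (hw : ∀ᶠ s in 𝓝 x, DifferentiableAt 𝕜 (w s) y)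
    (hu₁ : DifferentiableAt 𝕜 (u · y) x) (hw₁ : ContinuousAt (w · y) x)
    (hu₂ : DifferentiableAt 𝕜 (fun s => deriv (u s) y) x)
    (hw₂ : ContinuousAt (fun s => deriv (w s) y) x)
    (hu₀ : u x y = 0) (hux : deriv (u · y) x = 0) (huy : deriv (u x) y = 0) :
    deriv (fun s => deriv (fun t => u s t * w s t) y) x =
      deriv (fun s => deriv (u s) y) x * w x y := by
  have product_rule : (fun s => deriv (fun t => u s t * w s t) y) =ᶠ[𝓝 x]
      fun s => deriv (u s) y * w s y + u s y * deriv (w s) y := by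
    filter_upwards [hu, hw] with s hus hws using deriv_fun_mul hus hws
  have first := hasDerivAt_mul_of_left_eq_zero hu₂.hasDerivAt hw₁ huy
  have second := hasDerivAt_mul_of_left_eq_zero hu₁.hasDerivAt hw₂ hu₀
  rw [product_rule.deriv_eq, (first.fun_add second).deriv, hux, zero_mul, add_zero]

end ProductRule

theorem derivative_H_succ : ∀ n : ℕ, derivative (H (n + 1)) = C (2 * (n + 1) : ℝ) * H n
  | 0 => by simp [H]
  | 1 => by
    have H_two : H 2 = C 2 * X * H 1 - C 2 * H 0 := by simp [H]
    rw [H_two, derivative_sub, derivative_mul, derivative_C_mul, derivative_C_mul, derivative_X,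
      derivative_H_succ 0]
    simp only [H, derivative_one, CharP.cast_eq_zero, Nat.cast_one, map_mul, map_add, map_one,
      map_ofNat, map_zero]
    ring
  | n + 2 => by
    have recurrence : H (n + 2) = C 2 * X * H (n + 1) - C (2 * (n + 1) : ℝ) * H n := by rw [H]
    rw [H, derivative_sub, derivative_mul, derivative_C_mul, derivative_C_mul, derivative_X,
      derivative_H_succ (n + 1), derivative_H_succ n, recurrence]
    simp only [map_mul, map_add, map_one, map_ofNat, map_natCast, Nat.cast_add, Nat.cast_ofNat,
      Nat.cast_one]
    ring

theorem H_succ (n : ℕ) : H (n + 1) = C 2 * X * H n - derivative (H n) := by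
  cases n with
  | zero => simp [H]
  | succ n => rw [H, derivative_H_succ]

theorem isUnit_C_two_mul_succ (n : ℕ) : IsUnit (C (2 * (n + 1) : ℝ)) :=
  isUnit_C.2 (by positivity : (2 * (n + 1) : ℝ) ≠ 0).isUnit

theorem separable_H (n : ℕ) : (H n).Separable := by
  induction n with
  | zero => exact separable_one
  | succ n ih =>
    rw [separable_def, derivative_H_succ,
      isCoprime_mul_unit_left_right (isUnit_C_two_mul_succ n), H_succ]
    exact IsCoprime.mul_sub_right_left_iff.2 ih.symm

theorem separable_derivative_H {n : ℕ} (hn : n ≠ 0) : (derivative (H n)).Separable := by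
  obtain ⟨m, rfl⟩ := Nat.exists_eq_succ_of_ne_zero hn
  rw [Nat.succ_eq_add_one, derivative_H_succ]
  exact (separable_H m).unit_mul (isUnit_C_two_mul_succ m)

theorem eval_derivative_derivative_H_ne_zero {n : ℕ} (hn : n ≠ 0) {t : ℝ}
    (ht : (derivative (H n)).eval t = 0) : (derivative (derivative (H n))).eval t ≠ 0 :=
  (separable_derivative_H hn).eval₂_derivative_ne_zero (RingHom.id ℝ) ht

theorem Phi_swap (n : ℕ) (θ x y : ℝ) : Phi n (Real.pi / 2 - θ) (y, x) = Phi n θ (x, y) := by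
  simp only [Phi, Real.cos_pi_div_two_sub, Real.sin_pi_div_two_sub]
  ring_nf

namespace IsCriticalZero

variable {n : ℕ} {θ x y : ℝ}

theorem swap (h : IsCriticalZero n θ (x, y)) : IsCriticalZero n (Real.pi / 2 - θ) (y, x) := by
  obtain ⟨value, partial_fst, partial_snd⟩ := h
  simpa only [IsCriticalZero, Phi_swap] using And.intro value (And.intro partial_snd partial_fst)

theorem cos_mul_eval_add_sin_mul_eval (h : IsCriticalZero n θ (x, y)) :
    Real.cos θ * (H n).eval x + Real.sin θ * (H n).eval y = 0 :=
  (mul_eq_zero.1 h.1).resolve_right (Real.exp_ne_zero _)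

theorem cos_mul_eval_derivative (h : IsCriticalZero n θ (x, y)) :
    Real.cos θ * (derivative (H n)).eval x = 0 := by
  have partial_fst : deriv (fun x' => Phi n θ (x', y)) x =
      Real.cos θ * (derivative (H n)).eval x * Real.exp (-(x ^ 2 + y ^ 2) / 2) := by
    unfold Phi
    rw [deriv_mul_of_left_eq_zero (f := fun x' => Real.cos θ * (H n).eval x' + _)
      (by fun_prop) (by fun_prop) h.cos_mul_eval_add_sin_mul_eval]
    simp
  exact (mul_eq_zero.1 (partial_fst.symm.trans h.2.1)).resolve_right (Real.exp_ne_zero _)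

theorem sin_mul_eval_derivative (h : IsCriticalZero n θ (x, y)) :
    Real.sin θ * (derivative (H n)).eval y = 0 := by
  simpa only [Real.cos_pi_div_two_sub] using h.swap.cos_mul_eval_derivative

theorem deriv_deriv_fst (h : IsCriticalZero n θ (x, y)) :
    deriv (fun x' => deriv (fun x'' => Phi n θ (x'', y)) x') x =
      Real.exp (-(x ^ 2 + y ^ 2) / 2) *
        (Real.cos θ * (derivative (derivative (H n))).eval x) := by
  set u : ℝ → ℝ := fun x' => Real.cos θ * (H n).eval x' + Real.sin θ * (H n).eval y
  set w : ℝ → ℝ := fun x' => Real.exp (-(x' ^ 2 + y ^ 2) / 2)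
  have deriv_u : deriv u = fun x' => Real.cos θ * (derivative (H n)).eval x' := by
    ext x'
    simp [u]
  have hu : Differentiable ℝ u := by fun_prop
  have hw : ContDiff ℝ 1 w := by fun_prop
  calc deriv (deriv fun x' => u x' * w x') x
    _ = deriv (deriv u) x * w x :=
      deriv_deriv_mul_of_left_eq_zero (.of_forall hu) (.of_forall (hw.differentiable one_ne_zero))
        (deriv_u ▸ by fun_prop) hw.continuous_deriv_one.continuousAt
        h.cos_mul_eval_add_sin_mul_eval (by simp only [deriv_u, h.cos_mul_eval_derivative])
    _ = w x * (Real.cos θ * (derivative (derivative (H n))).eval x) := by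
      simp [deriv_u, mul_comm]

theorem deriv_deriv_snd (h : IsCriticalZero n θ (x, y)) :
    deriv (fun y' => deriv (fun y'' => Phi n θ (x, y'')) y') y =
      Real.exp (-(x ^ 2 + y ^ 2) / 2) *
        (Real.sin θ * (derivative (derivative (H n))).eval y) := by
  simpa only [Phi_swap, Real.cos_pi_div_two_sub, add_comm (y ^ 2)] using h.swap.deriv_deriv_fst

theorem deriv_fst_deriv_snd (h : IsCriticalZero n θ (x, y)) :
    deriv (fun x' => deriv (fun y' => Phi n θ (x', y')) y) x = 0 := by
  set u : ℝ → ℝ → ℝ := fun x' y' => Real.cos θ * (H n).eval x' + Real.sin θ * (H n).eval y'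
  set w : ℝ → ℝ → ℝ := fun x' y' => Real.exp (-(x' ^ 2 + y' ^ 2) / 2)
  have deriv_u (x' : ℝ) : deriv (u x') y = Real.sin θ * (derivative (H n)).eval y := by
    simp [u]
  have deriv_w (x' : ℝ) : deriv (w x') y = w x' y * -y := by
    rw [(((hasDerivAt_pow 2 y).const_add (x' ^ 2)).fun_neg.div_const 2).exp.deriv]
    ring
  calc deriv (fun x' => deriv (fun y' => u x' y' * w x' y') y) x
    _ = deriv (fun x' => deriv (u x') y) x * w x y :=
      deriv_deriv_mul_of_left_eq_zero₂ (.of_forall fun x' => by fun_prop)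
        (.of_forall fun x' => by fun_prop) (by fun_prop) (by fun_prop)
        (by simp only [deriv_u]; fun_prop) (by simp only [deriv_w]; fun_prop)
        h.cos_mul_eval_add_sin_mul_eval (by simp [u, h.cos_mul_eval_derivative])
        (by rw [deriv_u, h.sin_mul_eval_derivative])
    _ = 0 := by simp [deriv_u]

theorem deriv_snd_deriv_fst (h : IsCriticalZero n θ (x, y)) :
    deriv (fun y' => deriv (fun x' => Phi n θ (x', y')) x) y = 0 := by
  simpa only [Phi_swap] using h.swap.deriv_fst_deriv_snd

end IsCriticalZero

theorem cos_ne_zero_of_mem_Ioo_zero_pi {θ : ℝ} (hθ : θ ∈ Set.Ioo 0 Real.pi)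
    (hθ' : θ ≠ Real.pi / 2) : Real.cos θ ≠ 0 := by
  rw [← Real.cos_pi_div_two]
  exact fun h => hθ' <| Real.injOn_cos ⟨hθ.1.le, hθ.2.le⟩
    ⟨by positivity, by linarith [Real.pi_pos]⟩ h

open Real Set in
/-- At a critical zero `(x,y)` of `Φ^θ_n` (with `θ ∈ (0,π)`, `θ ≠ π/2`) the Hessian
matrix of `Φ^θ_n` is diagonal, equal to
`e^{-(x²+y²)/2} · diag(cos θ · H_n''(x), sin θ · H_n''(y))`, and nondegenerate. -/
theorem hessian_at_critical_zero (n : ℕ) (hn : 2 ≤ n) (θ : ℝ)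
    (hθ : θ ∈ Set.Ioo 0 π) (hθ' : θ ≠ π / 2) (x y : ℝ)
    (hcz : IsCriticalZero n θ (x, y)) :
    deriv (fun x' => deriv (fun x'' => Phi n θ (x'', y)) x') x =
      Real.exp (-(x ^ 2 + y ^ 2) / 2) *
        (Real.cos θ * (Polynomial.derivative (Polynomial.derivative (H n))).eval x) ∧
    deriv (fun y' => deriv (fun y'' => Phi n θ (x, y'')) y') y =
      Real.exp (-(x ^ 2 + y ^ 2) / 2) *
        (Real.sin θ * (Polynomial.derivative (Polynomial.derivative (H n))).eval y) ∧
    deriv (fun x' => deriv (fun y' => Phi n θ (x', y')) y) x = 0 ∧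
    deriv (fun y' => deriv (fun x' => Phi n θ (x', y')) x) y = 0 ∧
    (deriv (fun x' => deriv (fun x'' => Phi n θ (x'', y)) x') x) *
      (deriv (fun y' => deriv (fun y'' => Phi n θ (x, y'')) y') y) -
      (deriv (fun x' => deriv (fun y' => Phi n θ (x', y')) y) x) *
      (deriv (fun y' => deriv (fun x' => Phi n θ (x', y')) x) y) ≠ 0 := by
  have hcos : Real.cos θ ≠ 0 := cos_ne_zero_of_mem_Ioo_zero_pi hθ hθ'
  have hsin : Real.sin θ ≠ 0 := (Real.sin_pos_of_mem_Ioo hθ).ne'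
  have hn₀ : n ≠ 0 := by omega
  have hx : (derivative (derivative (H n))).eval x ≠ 0 :=
    eval_derivative_derivative_H_ne_zero hn₀
      ((mul_eq_zero.1 hcz.cos_mul_eval_derivative).resolve_left hcos)
  have hy : (derivative (derivative (H n))).eval y ≠ 0 :=
    eval_derivative_derivative_H_ne_zero hn₀
      ((mul_eq_zero.1 hcz.sin_mul_eval_derivative).resolve_left hsin)
  refine ⟨hcz.deriv_deriv_fst, hcz.deriv_deriv_snd, hcz.deriv_fst_deriv_snd,
    hcz.deriv_snd_deriv_fst, ?_⟩
  rw [hcz.deriv_deriv_fst, hcz.deriv_deriv_snd, hcz.deriv_fst_deriv_snd, zero_mul, sub_zero]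
  exact mul_ne_zero (mul_ne_zero (Real.exp_ne_zero _) (mul_ne_zero hcos hx))
    (mul_ne_zero (Real.exp_ne_zero _) (mul_ne_zero hsin hy))
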